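/- arXiv:2506.20778 — 3 statements merged into one kernel-verified Lean document; each statement's English description precedes it below -/
import Mathlib

section
/- For every prime p with p ≡ 3 mod 4, the set of positive integers d such that there exists a (12,16,96)-SIC consisting of d² vectors in F_{p²}^d is infinite. -/
open scoped BigOperators

noncomputable section

/-- A `(12,16,96)`-SIC of `d²` vectors in `F_{p²}^d = (GaloisField p 2)^d`, where
conjugation is the Frobenius `x ↦ x ^ p`: the vectors have norm `12`, pairwise
products of cross inner products equal `16`, they resolve `96` times the identity,
and they span the space. -/
def IsSIC (p : ℕ) [Fact p.Prime] (d : ℕ)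
    (x : Fin (d ^ 2) → Fin d → GaloisField p 2) : Prop :=
  (∀ m, (∑ k, x m k ^ p * x m k) = 12) ∧
  (∀ m n, m ≠ n →
    (∑ k, x m k ^ p * x n k) * (∑ k, x n k ^ p * x m k) = 16) ∧
  (∀ k l, (∑ m, x m k * x m l ^ p) = if k = l then 96 else 0) ∧
  Submodule.span (GaloisField p 2) (Set.range x) = ⊤


section helper
variable {F : Type*} [Field F]

def sicS (F : Type*) [Field F] (a b : Bool) : F := if a && b then -1 else 1

def sicChi (F : Type*) [Field F] {m : ℕ} (b k : Fin m → Bool) : F := ∏ i, sicS F (b i) (k i)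

def sicV (z : F) {m : ℕ} (a b k : Fin m → Bool) : F := sicChi F b k * (1 + if k = a then z else 0)

lemma sicS_sq (a b : Bool) : sicS F a b * sicS F a b = 1 := by
  cases a <;> cases b <;> simp [sicS]

lemma sicChi_sq {m : ℕ} (b k : Fin m → Bool) : sicChi F b k * sicChi F b k = 1 := by
  unfold sicChi
  rw [← Finset.prod_mul_distrib]
  exact Finset.prod_eq_one (fun i _ => sicS_sq _ _)

lemma sicChi_comm {m : ℕ} (b k : Fin m → Bool) : sicChi F b k = sicChi F k b := by
  unfold sicChi sicS
  simp only [Bool.and_comm]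

lemma sicChi_orth {m : ℕ} (b b' : Fin m → Bool) :
    ∑ k, sicChi F b k * sicChi F b' k = if b = b' then (2 : F) ^ m else 0 := by
  have h1 : ∑ k, sicChi F b k * sicChi F b' k
      = ∏ i, ∑ t, sicS F (b i) t * sicS F (b' i) t := by
    rw [Fintype.prod_sum]
    simp only [sicChi, Finset.prod_mul_distrib]
  rw [h1]
  have h2 : ∀ i, ∑ t, sicS F (b i) t * sicS F (b' i) t = if b i = b' i then (2 : F) else 0 := by
    intro i
    cases b i <;> cases b' i <;> simp [sicS] <;> norm_num
  simp only [h2]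
  split_ifs with h
  · subst h; simp
  · obtain ⟨i, hi⟩ := Function.ne_iff.1 h
    exact Finset.prod_eq_zero (Finset.mem_univ i) (by simp [hi])

lemma sicChi_map (c : F →+* F) {m : ℕ} (b k : Fin m → Bool) :
    c (sicChi F b k) = sicChi F b k := by
  unfold sicChi sicS
  rw [map_prod]
  refine Finset.prod_congr rfl (fun i _ => ?_)
  split_ifs <;> simp

lemma sic_ip (c : F →+* F) (z : F) {m : ℕ} (a b a' b' : Fin m → Bool) :
    ∑ k, c (sicV z a b k) * sicV z a' b' k =
      (if b = b' then (2 : F) ^ m else 0) + c z * (sicChi F b a * sicChi F b' a)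
      + z * (sicChi F b a' * sicChi F b' a')
      + if a = a' then c z * z * (sicChi F b a * sicChi F b' a) else 0 := by
  have h : ∀ k, c (sicV z a b k) * sicV z a' b' k =
      sicChi F b k * sicChi F b' k
      + (if k = a then c z * (sicChi F b k * sicChi F b' k) else 0)
      + (if k = a' then z * (sicChi F b k * sicChi F b' k) else 0)
      + (if k = a then (if a = a' then c z * z * (sicChi F b a * sicChi F b' a) else 0) else 0) := by
    intro k
    unfold sicV
    rw [map_mul, sicChi_map, map_add, map_one]
    by_cases h1 : k = a
    · subst h1
      by_cases h2 : k = a'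
      · simp [h2]; ring
      · simp [h2]; ring
    · by_cases h2 : k = a'
      · simp [h1, h2]
        subst h2
        simp [h1]; ring
      · simp [h1, h2]
  simp only [h, Finset.sum_add_distrib, sicChi_orth, Finset.sum_ite_eq', Finset.mem_univ, if_true]

lemma sic_norm (c : F →+* F) (z : F) (hs : z + c z = -4) (hm : c z * z = 8) {m : ℕ}
    (hd : (2 : F) ^ m = 8) (a b : Fin m → Bool) :
    ∑ k, c (sicV z a b k) * sicV z a b k = 12 := by
  rw [sic_ip]
  simp only [if_true, sicChi_sq, hd, hm]
  linear_combination hs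

lemma sic_cross (c : F →+* F) (z : F) (hs : z + c z = -4) (hm : c z * z = 8) {m : ℕ}
    (hd : (2 : F) ^ m = 8) (a b a' b' : Fin m → Bool) (hne : ¬ (a = a' ∧ b = b')) :
    (∑ k, c (sicV z a b k) * sicV z a' b' k) * (∑ k, c (sicV z a' b' k) * sicV z a b k) = 16 := by
  rw [sic_ip, sic_ip]
  have hz : c z = -4 - z := by linear_combination hs
  rw [hz] at hm ⊢
  by_cases h1 : a = a'
  · subst h1
    have h2 : b ≠ b' := fun h => hne ⟨rfl, h⟩
    simp only [if_true, if_neg h2, if_neg h2.symm, hm]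
    have e1 := sicChi_sq (F := F) b a
    have e2 := sicChi_sq (F := F) b' a
    generalize sicChi F b a = u at *
    generalize sicChi F b' a = v at *
    linear_combination 16 * v * v * e1 + 16 * e2
  · by_cases h2 : b = b'
    · subst h2
      simp only [if_true, if_neg h1, if_neg (Ne.symm h1), sicChi_sq, hd]
      ring
    · simp only [if_neg h1, if_neg (Ne.symm h1), if_neg h2, if_neg (Ne.symm h2)]
      have e1 : (sicChi F b a * sicChi F b' a) * (sicChi F b a * sicChi F b' a) = 1 := by
        linear_combination sicChi F b' a * sicChi F b' a * sicChi_sq (F := F) b a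
          + sicChi_sq (F := F) b' a
      have e2 : (sicChi F b a' * sicChi F b' a') * (sicChi F b a' * sicChi F b' a') = 1 := by
        linear_combination sicChi F b' a' * sicChi F b' a' * sicChi_sq (F := F) b a'
          + sicChi_sq (F := F) b' a'
      rw [mul_comm (sicChi F b' a'), mul_comm (sicChi F b' a)]
      generalize sicChi F b a * sicChi F b' a = u at *
      generalize sicChi F b a' * sicChi F b' a' = v at *
      linear_combination (-4 - z) * z * (e1 + e2) + (2 - 2 * u * v) * hm

lemma sic_tight (c : F →+* F) (z : F) (hs : z + c z = -4) (hm : c z * z = 8) {m : ℕ}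
    (hd : (2 : F) ^ m = 8) (k l : Fin m → Bool) :
    ∑ ab : (Fin m → Bool) × (Fin m → Bool), sicV z ab.1 ab.2 k * c (sicV z ab.1 ab.2 l)
      = if k = l then 96 else 0 := by
  rw [Fintype.sum_prod_type]
  have h : ∀ a, ∑ b, sicV z a b k * c (sicV z a b l)
      = (if k = l then 8 else 0) *
        ((1 + if k = a then z else 0) * c (1 + if l = a then z else 0)) := by
    intro a
    rw [← hd, ← sicChi_orth k l, Finset.sum_mul]
    refine Finset.sum_congr rfl (fun b _ => ?_)
    unfold sicV
    rw [map_mul, sicChi_map, sicChi_comm b k, sicChi_comm b l]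
    ring
  simp only [h]
  split_ifs with hkl
  · subst hkl
    have h2 : ∀ a : Fin m → Bool, (8 : F) * ((1 + if k = a then z else 0) * c (1 + if k = a then z else 0))
        = 8 + if k = a then (8 * (z + c z + c z * z)) else 0 := by
      intro a
      split_ifs <;> simp
      ring
    simp only [h2, Finset.sum_add_distrib, Finset.sum_ite_eq, Finset.mem_univ, if_true, hs, hm]
    simp only [Finset.sum_const, Finset.card_univ, Fintype.card_fun, Fintype.card_bool,
      Fintype.card_fin, nsmul_eq_mul]
    push_cast
    rw [hd]; norm_num
  · simp

lemma sic_span (z : F) {m : ℕ} (h0 : m ≠ 0) (h2 : (2 : F) ≠ 0) :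
    Submodule.span F (Set.range (fun ab : (Fin m → Bool) × (Fin m → Bool) => sicV z ab.1 ab.2)) = ⊤ := by
  haveI : NeZero m := ⟨h0⟩
  rw [eq_top_iff, ← (Pi.basisFun F (Fin m → Bool)).span_eq, Submodule.span_le]
  rintro _ ⟨l, rfl⟩
  obtain ⟨a, ha⟩ : ∃ a : Fin m → Bool, l ≠ a := (exists_ne l).imp fun _ h => h.symm
  have key : (Pi.basisFun F (Fin m → Bool)) l
      = ∑ b, (((2 : F) ^ m)⁻¹ * sicChi F b l) • sicV z a b := by
    ext k
    simp only [Pi.basisFun_apply, Finset.sum_apply, Pi.smul_apply, smul_eq_mul]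
    have : ∀ b, ((2 : F) ^ m)⁻¹ * sicChi F b l * sicV z a b k
      = (((2 : F) ^ m)⁻¹ * (1 + if k = a then z else 0)) * (sicChi F k b * sicChi F l b) := by
      intro b
      unfold sicV
      rw [sicChi_comm b k, sicChi_comm b l]; ring
    simp only [this, ← Finset.mul_sum, sicChi_orth]
    by_cases hk : k = l
    · subst hk
      simp [ha, h2]
    · simp [hk]
  rw [key]
  exact Submodule.sum_mem _ fun b _ => Submodule.smul_mem _ _ (Submodule.subset_span ⟨(a, b), rfl⟩)

end helper

lemma sic_exists_z (p : ℕ) [Fact p.Prime] (hp4 : p % 4 = 3) :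
    ∃ z : GaloisField p 2, z + frobenius (GaloisField p 2) p z = -4 ∧
      frobenius (GaloisField p 2) p z * z = 8 := by
  haveI : Fintype (GaloisField p 2) := Fintype.ofFinite _
  have hc : Fintype.card (GaloisField p 2) = p ^ 2 := by
    rw [← Nat.card_eq_fintype_card, GaloisField.card p 2 (by norm_num)]
  obtain ⟨i, hi⟩ : IsSquare (-1 : GaloisField p 2) := by
    rw [FiniteField.isSquare_neg_one_iff, hc, Nat.pow_mod, hp4]; norm_num
  have hfi : frobenius (GaloisField p 2) p i = -i := by
    have hpd : p = 4 * (p / 4) + 3 := by omega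
    have hpow : i ^ p = i ^ (4 * (p / 4) + 3) := congrArg (fun n : ℕ => i ^ n) hpd
    rw [frobenius_def, hpow, pow_add, pow_mul]
    have h4 : i ^ 4 = 1 := by linear_combination (-i * i + 1) * hi
    rw [h4, one_pow]; linear_combination -i * hi
  refine ⟨-2 + 2 * i, ?_, ?_⟩
  · simp only [map_add, map_neg, map_mul, map_ofNat, hfi]; ring
  · simp only [map_add, map_neg, map_mul, map_ofNat, hfi]
    linear_combination 4 * hi

lemma sic_dim (p : ℕ) [Fact p.Prime] (hp4 : p % 4 = 3) {m : ℕ} (h0 : m ≠ 0)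
    (hd : (2 : GaloisField p 2) ^ m = 8) :
    ∃ x : Fin ((2 ^ m) ^ 2) → Fin (2 ^ m) → GaloisField p 2, IsSIC p (2 ^ m) x := by
  obtain ⟨z, hs, hm⟩ := sic_exists_z p hp4
  have e : Fin (2 ^ m) ≃ (Fin m → Bool) := Fintype.equivOfCardEq (by simp)
  have f : Fin ((2 ^ m) ^ 2) ≃ (Fin m → Bool) × (Fin m → Bool) :=
    Fintype.equivOfCardEq (by simp [sq])
  have h2 : (2 : GaloisField p 2) ≠ 0 := by
    intro h
    have : ((2 : ℕ) : GaloisField p 2) = 0 := by exact_mod_cast h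
    rw [CharP.cast_eq_zero_iff (GaloisField p 2) p] at this
    have := Nat.le_of_dvd (by norm_num) this
    have : p % 4 = p := Nat.mod_eq_of_lt (by omega)
    omega
  refine ⟨fun n k => sicV z (f n).1 (f n).2 (e k), ?_, ?_, ?_, ?_⟩
  · intro n
    rw [← sic_norm _ z hs hm hd (f n).1 (f n).2, ← e.sum_comp]
    rfl
  · intro n n' hne
    rw [← sic_cross _ z hs hm hd (f n).1 (f n).2 (f n').1 (f n').2
      (fun h => hne (f.injective (Prod.ext h.1 h.2))), ← e.sum_comp, ← e.sum_comp]
    rfl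
  · intro k l
    have := sic_tight _ z hs hm hd (e k) (e l)
    rw [← f.sum_comp] at this
    simp only [e.injective.eq_iff] at this
    exact this
  · have h := sic_span z h0 h2
    have h' := congrArg (Submodule.map
      (LinearEquiv.funCongrLeft (GaloisField p 2) (GaloisField p 2) e).toLinearMap) h
    rw [Submodule.map_span, Submodule.map_top, LinearEquiv.range, ← Set.range_comp] at h'
    rw [← h', ← f.surjective.range_comp]
    rfl

theorem stmt_6 (p : ℕ) [Fact p.Prime] (hp4 : p % 4 = 3) :
    {d : ℕ | 0 < d ∧ ∃ x : Fin (d ^ 2) → Fin d → GaloisField p 2, IsSIC p d x}.Infinite := by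
  have hp : p ≠ 2 := by rintro rfl; omega
  have hpp : 2 < p := lt_of_le_of_ne (Fact.out : p.Prime).two_le hp.symm
  refine Set.infinite_of_injective_forall_mem (f := fun t : ℕ => 2 ^ (3 + (p - 1) * t)) ?_ ?_
  · intro s t h
    have h1 := Nat.pow_right_injective (le_refl 2) h
    have h2 : (p - 1) * s = (p - 1) * t := by omega
    exact Nat.eq_of_mul_eq_mul_left (by omega) h2
  · intro t
    refine ⟨by positivity, sic_dim p hp4 (by omega) ?_⟩
    have hz : (2 : ZMod p) ≠ 0 := by
      intro h
      have : ((2 : ℕ) : ZMod p) = 0 := by exact_mod_cast h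
      rw [ZMod.natCast_eq_zero_iff] at this
      have := Nat.le_of_dvd (by norm_num) this
      omega
    have h1 : (2 : GaloisField p 2) ^ (p - 1) = 1 := by
      have := congrArg (algebraMap (ZMod p) (GaloisField p 2)) (ZMod.pow_card_sub_one_eq_one hz)
      rwa [map_pow, map_one, show algebraMap (ZMod p) (GaloisField p 2) 2 = 2 from map_ofNat _ 2] at this
    rw [pow_add, pow_mul, h1, one_pow]; norm_num
end
end

section
/- Assume the p-modular Hadamard conjecture: for every odd prime p, for all but finitely many positive integers d, if d is even or d is a nonzero quadratic residue modulo p then there exists a p-modular Hadamard matrix of order d (a d×d matrix over F_p with all entries squaring to 1 and HᵀH = d·I over F_p). Then the set of positive integers d for which there exist a prime p ≡ 3 mod 4 and a (12,16,96)-SIC of d² vectors in F_{p²}^d contains almost every positive integer; that is, its complement S ⊆ ℕ satisfies limsup_{n→∞} |S ∩ {1,…,n}|/n = 0. -/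
open scoped BigOperators

noncomputable section

/-- The abstract construction of a SIC from a modular Hadamard matrix. -/
lemma sic_inner {K : Type*} [Field K] {d : ℕ}
    (G : Fin d → Fin d → K) 
    (hG : ∀ a b, ∑ k, G k a * G k b = if a = b then 8 else 0)
    (I : K) (hI : I ^ 2 = -1) (a b j l : Fin d) :
    (∑ k, (G k a * (if k = j then (-1 - 2 * I) else 1)) * (G k b * (if k = l then (-1 + 2 * I) else 1)))
      = (if a = b then 8 else 0) + (if j = l then 4 * (G j a * G j b) else
          (-2 - 2 * I) * (G j a * G j b) + (-2 + 2 * I) * (G l a * G l b)) := by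
  have key : ∀ k, (G k a * (if k = j then (-1 - 2 * I) else 1)) * (G k b * (if k = l then (-1 + 2 * I) else 1))
      = G k a * G k b + (if j = l then (if k = j then 4 * (G k a * G k b) else 0) else
        ((if k = j then (-2 - 2 * I) * (G k a * G k b) else 0) +
          (if k = l then (-2 + 2 * I) * (G k a * G k b) else 0))) := by
    intro k
    by_cases h1 : k = j
    · subst h1
      by_cases h2 : k = l
      · subst h2
        simp
        linear_combination (-4 * G k a * G k b) * hI
      · simp [h2]; ring
    · by_cases h2 : k = l
      · subst h2
        simp [h1, Ne.symm h1]; ring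
      · simp [h1, h2]
  rw [Finset.sum_congr rfl (fun k _ => key k), Finset.sum_add_distrib, hG]
  congr 1
  by_cases h : j = l
  · simp [h]
  · simp [h, Finset.sum_add_distrib]

lemma sic_exists (p : ℕ) [Fact p.Prime] (hp4 : p % 4 = 3) (hp3 : p ≠ 3) (d : ℕ)
    (hd8 : (d : ZMod p) = 8) (H : Matrix (Fin d) (Fin d) (ZMod p))
    (hH1 : ∀ i j, H i j ^ 2 = 1)
    (hH : H.transpose * H = (d : ZMod p) • (1 : Matrix (Fin d) (Fin d) (ZMod p))) :
    ∃ x : Fin (d ^ 2) → Fin d → GaloisField p 2, IsSIC p d x := by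
  have hpp : p.Prime := Fact.out
  set K := GaloisField p 2 with hK
  let φ := algebraMap (ZMod p) K
  have h2 : (2 : ZMod p) ≠ 0 := by
    intro h
    have : ((2 : ℕ) : ZMod p) = 0 := by exact_mod_cast h
    rw [ZMod.natCast_eq_zero_iff, Nat.prime_dvd_prime_iff_eq hpp Nat.prime_two] at this
    omega
  have h3 : (3 : ZMod p) ≠ 0 := by
    intro h
    have : ((3 : ℕ) : ZMod p) = 0 := by exact_mod_cast h
    rw [ZMod.natCast_eq_zero_iff, Nat.prime_dvd_prime_iff_eq hpp Nat.prime_three] at this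
    omega
  have h8 : (8 : ZMod p) ≠ 0 := by
    have : (8 : ZMod p) = 2 ^ 3 := by norm_num
    rw [this]; exact pow_ne_zero _ h2
  have h96 : (96 : K) ≠ 0 := by
    have : (96 : K) = φ (2 ^ 5 * 3) := by
      rw [map_mul, map_pow, map_ofNat, map_ofNat]; norm_num
    rw [this]
    exact (map_ne_zero φ).2 (mul_ne_zero (pow_ne_zero _ h2) h3)
  have h8K : φ 8 = 8 := map_ofNat φ 8
  have hdK : (d : K) = 8 := by
    have := congrArg φ hd8
    rwa [map_natCast, map_ofNat] at this
  obtain ⟨I, hI⟩ : ∃ I : K, I ^ 2 = -1 := by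
    have : Fintype K := Fintype.ofFinite K
    have hs : IsSquare (-1 : K) := by
      rw [FiniteField.isSquare_neg_one_iff]
      rw [← Nat.card_eq_fintype_card, GaloisField.card p 2 (by norm_num), pow_two, Nat.mul_mod, hp4]
      norm_num
    obtain ⟨r, hr⟩ := hs
    exact ⟨r, by rw [hr]; ring⟩
  have hIp : I ^ p = -I := by
    obtain ⟨k, hk⟩ : ∃ k, p = 2 * (2 * k + 1) + 1 := ⟨p / 4, by omega⟩
    have h : I ^ (2 * (2 * k + 1) + 1) = -I := by
      rw [pow_succ, pow_mul, hI, Odd.neg_one_pow ⟨k, rfl⟩]; ring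
    rwa [← hk] at h
  have hv : (-1 + 2 * I) ^ p = -1 - 2 * I := by
    have : frobenius K p (-1 + 2 * I) = -1 - 2 * I := by
      rw [map_add, map_mul, map_neg, map_one, map_ofNat, frobenius_def, hIp]; ring
    simpa [frobenius_def] using this
  have hHH : H * H.transpose = (8 : ZMod p) • (1 : Matrix (Fin d) (Fin d) (ZMod p)) := by
    rw [hd8] at hH
    have h1 : ((8 : ZMod p)⁻¹ • H.transpose) * H = 1 := by
      rw [Matrix.smul_mul, hH, smul_smul, inv_mul_cancel₀ h8, one_smul]
    have h2 := mul_eq_one_comm.1 h1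
    rw [Matrix.mul_smul] at h2
    rw [← h2, smul_smul, mul_inv_cancel₀ h8, one_smul]
  obtain ⟨G, hG0⟩ : ∃ G : Fin d → Fin d → K, ∀ i j, G i j = φ (H i j) := ⟨_, fun _ _ => rfl⟩
  have hG1 : ∀ i j, G i j ^ 2 = 1 := fun i j => by
    simp only [hG0, ← map_pow, hH1, map_one]
  have hGp : ∀ i j, G i j ^ p = G i j := fun i j => by
    simp only [hG0, ← map_pow, ZMod.pow_card]
  have hG : ∀ a b, ∑ k, G k a * G k b = if a = b then 8 else 0 := by
    intro a b
    have := congrArg φ (congrFun (congrFun hH a) b)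
    simp only [Matrix.mul_apply, Matrix.transpose_apply, map_sum, map_mul, Matrix.smul_apply,
      Matrix.one_apply, hd8] at this
    simp only [hG0]
    rw [this]
    split_ifs <;> simp [h8K]
  have hGG : ∀ k l, ∑ a, G k a * G l a = if k = l then 8 else 0 := by
    intro a b
    have := congrArg φ (congrFun (congrFun hHH a) b)
    simp only [Matrix.mul_apply, Matrix.transpose_apply, map_sum, map_mul, Matrix.smul_apply,
      Matrix.one_apply] at this
    simp only [hG0]
    rw [this]
    split_ifs <;> simp [h8K]
  let e : Fin (d ^ 2) ≃ Fin d × Fin d := Fintype.equivOfCardEq (by simp [pow_two])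
  let y : Fin d × Fin d → Fin d → K := fun m k => G k m.1 * (if k = m.2 then (-1 + 2 * I) else 1)
  have hyp : ∀ m k, y m k ^ p = G k m.1 * (if k = m.2 then (-1 - 2 * I) else 1) := by
    intro m k
    simp only [y, mul_pow, hGp]
    split_ifs <;> simp [hv]
  have hin : ∀ m n, ∑ k, y m k ^ p * y n k = (if m.1 = n.1 then 8 else 0) +
      (if m.2 = n.2 then 4 * (G m.2 m.1 * G m.2 n.1) else
          (-2 - 2 * I) * (G m.2 m.1 * G m.2 n.1) + (-2 + 2 * I) * (G n.2 m.1 * G n.2 n.1)) := by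
    intro m n
    rw [← sic_inner G hG I hI]
    simp only [hyp]
    rfl
  have hres : ∀ k l, (∑ m, y m k * y m l ^ p) = if k = l then 96 else 0 := by
    intro k l
    rw [Fintype.sum_prod_type, Finset.sum_comm]
    have : ∀ j : Fin d, ∑ a, y (a, j) k * y (a, j) l ^ p =
        if k = l then (8 + if k = j then 32 else 0) else 0 := by
      intro j
      have h1 : ∀ a, y (a, j) k * y (a, j) l ^ p = (G k a * G l a) *
          ((if k = j then (-1 + 2 * I) else 1) * (if l = j then (-1 - 2 * I) else 1)) := by
        intro a
        rw [hyp]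
        simp only [y]
        ring
      rw [Finset.sum_congr rfl (fun a _ => h1 a), ← Finset.sum_mul, hGG]
      by_cases hkl : k = l
      · subst hkl
        by_cases hkj : k = j
        · simp [hkj]; linear_combination (-32) * hI
        · simp [hkj]
      · simp [hkl]
    rw [Finset.sum_congr rfl (fun j _ => this j)]
    by_cases hkl : k = l
    · simp [hkl, Finset.sum_add_distrib, hdK]; norm_num
    · simp [hkl]
  have hsq : ∀ i j, G i j * G i j = 1 := fun i j => by rw [← pow_two]; exact hG1 i j
  refine ⟨fun m => y (e m), ?_, ?_, ?_, ?_⟩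
  · intro m
    rw [hin]
    simp [hsq]; norm_num
  · intro m n hmn
    have hne : e m ≠ e n := fun h => hmn (e.injective h)
    beta_reduce
    generalize e m = m' at hne ⊢
    generalize e n = n' at hne ⊢
    obtain ⟨a, j⟩ := m'
    obtain ⟨b, l⟩ := n'
    rw [hin, hin]
    by_cases hab : a = b
    · subst hab
      have hjl : j ≠ l := fun h => hne (by rw [h])
      simp only [hjl, hjl.symm, if_true, if_false, hsq]
      ring
    · simp only [hab, Ne.symm hab, if_false]
      by_cases hjl : j = l
      · subst hjl
        simp only [if_true]
        linear_combination 16 * G j b ^ 2 * hG1 j a + 16 * hG1 j b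
      · simp only [hjl, Ne.symm hjl, if_false]
        have e1 : (G j a * G j b) ^ 2 = 1 := by rw [mul_pow, hG1, hG1, one_mul]
        have e2 : (G l a * G l b) ^ 2 = 1 := by rw [mul_pow, hG1, hG1, one_mul]
        rw [mul_comm (G l b), mul_comm (G j b)]
        generalize G j a * G j b = s at e1 ⊢
        generalize G l a * G l b = t at e2 ⊢
        have : (0 + ((-2 - 2 * I) * s + (-2 + 2 * I) * t)) * (0 + ((-2 - 2 * I) * t + (-2 + 2 * I) * s))
          = (s ^ 2 + t ^ 2) * (4 - 4 * I ^ 2) + s * t * (8 + 8 * I ^ 2) := by ring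
        rw [this, e1, e2, hI]; ring
  · intro k l
    rw [← hres k l]
    exact Equiv.sum_comp e (fun m => y m k * y m l ^ p)
  · rw [eq_top_iff, ← (Pi.basisFun K (Fin d)).span_eq, Submodule.span_le]
    rintro _ ⟨l, rfl⟩
    have : (Pi.basisFun K (Fin d)) l = (96 : K)⁻¹ • ∑ m, (y (e m) l ^ p) • y (e m) := by
      ext k
      have h := hres k l
      rw [← Equiv.sum_comp e (fun m => y m k * y m l ^ p)] at h
      simp only [Pi.basisFun_apply, Pi.smul_apply, Finset.sum_apply, smul_eq_mul]
      simp only [mul_comm (y _ l ^ p)]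
      rw [h]
      by_cases hkl : k = l
      · subst hkl; simp [inv_mul_cancel₀ h96]
      · simp [hkl]
    rw [this]
    refine Submodule.smul_mem _ _ (Submodule.sum_mem _ fun m _ => Submodule.smul_mem _ _ ?_)
    exact Submodule.subset_span ⟨m, rfl⟩

open ArithmeticFunction.vonMangoldt in
/-- Divergence of the sum of reciprocals of primes in a residue class. -/
lemma not_summable_primes_ap {q : ℕ} [NeZero q] {a : ZMod q} (ha : IsUnit a) :
    ¬ Summable (fun n : ℕ => if n.Prime ∧ (n : ZMod q) = a then (n : ℝ)⁻¹ else 0) := by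
  intro hs
  obtain ⟨C, hC⟩ := LSeries_residueClass_lower_bound ha
  set B : ℕ → ℝ := fun n => (if n.Prime ∧ (n : ZMod q) = a then (n : ℝ)⁻¹ else 0) +
    (if n.Prime then 0 else residueClass a n) / n with hB
  have hBs : Summable B := hs.add (summable_residueClass_non_primes_div a)
  have hlim : Filter.Tendsto (fun t : ℝ => ∑' n : ℕ, t * (residueClass a n / (n : ℝ) ^ (1 + t)))
      (nhdsWithin 0 (Set.Ioi 0)) (nhds (∑' _ : ℕ, (0 : ℝ))) := by
    refine tendsto_tsum_of_dominated_convergence hBs ?_ ?_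
    · intro n
      rcases Nat.eq_zero_or_pos n with rfl | hn
      · simp
      have hn' : (n : ℝ) ≠ 0 := by positivity
      have hc : Continuous (fun t : ℝ => t * (residueClass a n / (n : ℝ) ^ (1 + t))) := by
        refine continuous_id.mul (continuous_const.div ?_ ?_)
        · exact Continuous.rpow continuous_const (by fun_prop) (fun _ => Or.inl hn')
        · intro t; positivity
      have := hc.tendsto 0
      simp only [zero_mul] at this
      exact this.mono_left nhdsWithin_le_nhds
    · have h1 : Set.Ioo (0 : ℝ) 1 ∈ nhdsWithin (0 : ℝ) (Set.Ioi 0) :=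
        Ioo_mem_nhdsGT one_pos
      filter_upwards [h1] with t ht n
      obtain ⟨ht0, ht1⟩ := ht
      rcases Nat.eq_zero_or_pos n with rfl | hn
      · simp [hB]
      have hnR : (0 : ℝ) < n := by positivity
      have hnn := residueClass_nonneg a n
      rw [Real.norm_of_nonneg (by positivity), Real.rpow_add hnR, Real.rpow_one]
      simp only [hB]
      by_cases hp : n.Prime
      · by_cases hna : (n : ZMod q) = a
        · have hv : residueClass a n = Real.log n := by
            rw [residueClass, Set.indicator_of_mem (by exact hna)]
            exact ArithmeticFunction.vonMangoldt_apply_prime hp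
          simp only [hp, hna, and_self, if_true, zero_div, add_zero, hv]
          have h2 : t * Real.log n ≤ (n : ℝ) ^ t := by
            rw [Real.rpow_def_of_pos hnR]
            have := Real.add_one_le_exp (Real.log n * t)
            linarith
          have hpos : (0 : ℝ) < (n : ℝ) ^ t := by positivity
          rw [← mul_div_assoc, div_le_iff₀ (by positivity), ← mul_assoc, inv_mul_cancel₀ hnR.ne',
            one_mul]
          exact h2
        · have hv : residueClass a n = 0 := by
            rw [residueClass, Set.indicator_of_notMem (by exact hna)]
          simp [hp, hna]
      · simp only [hp, false_and, if_false, zero_add]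
        have h1t : (1 : ℝ) ≤ (n : ℝ) ^ t := Real.one_le_rpow (by exact_mod_cast hn) ht0.le
        calc t * (residueClass a n / (n * (n : ℝ) ^ t)) ≤ 1 * (residueClass a n / (n * 1)) := by
              gcongr
          _ = _ := by simp
  simp only [tsum_zero, tsum_mul_left] at hlim
  have hlow : Filter.Tendsto (fun t : ℝ => (q.totient : ℝ)⁻¹ - t * C)
      (nhdsWithin 0 (Set.Ioi 0)) (nhds ((q.totient : ℝ)⁻¹ - 0 * C)) := by
    have : Continuous (fun t : ℝ => (q.totient : ℝ)⁻¹ - t * C) := by fun_prop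
    exact (this.tendsto 0).mono_left nhdsWithin_le_nhds
  have hle := le_of_tendsto_of_tendsto hlow hlim (by
    filter_upwards [Ioo_mem_nhdsGT (zero_lt_one (α := ℝ))] with t ht
    have := hC (x := 1 + t) ⟨by linarith [ht.1], by linarith [ht.2]⟩
    have h2 := mul_le_mul_of_nonneg_left this ht.1.le
    refine le_trans (le_of_eq ?_) h2
    have : t ≠ 0 := ht.1.ne'
    rw [add_sub_cancel_left]
    field_simp)
  have hpos : (0 : ℝ) < (q.totient : ℝ)⁻¹ := by
    have := Nat.totient_pos.2 (NeZero.pos q)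
    positivity
  linarith

lemma exists_primes_small {ε : ℝ} (hε : 0 < ε) :
    ∃ P : Finset ℕ, (∀ p ∈ P, p.Prime ∧ p % 8 = 7) ∧ ∏ p ∈ P, (1 - (p : ℝ)⁻¹) < ε := by
  have ha : IsUnit (7 : ZMod 8) := by decide
  have hns := not_summable_primes_ap ha
  obtain ⟨s, hs⟩ : ∃ s : Finset ℕ, 1 - Real.log ε <
      ∑ n ∈ s, if n.Prime ∧ (n : ZMod 8) = 7 then (n : ℝ)⁻¹ else 0 := by
    by_contra! hcon
    exact hns (summable_of_sum_le (fun n => by positivity) hcon)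
  refine ⟨s.filter (fun n : ℕ => n.Prime ∧ (n : ZMod 8) = 7), ?_, ?_⟩
  · intro p hp
    obtain ⟨-, h1, h2⟩ := Finset.mem_filter.1 hp
    refine ⟨h1, ?_⟩
    have : ((p : ℕ) : ZMod 8) = ((7 : ℕ) : ZMod 8) := by exact_mod_cast h2
    rw [ZMod.natCast_eq_natCast_iff] at this
    exact this
  · rw [← Finset.sum_filter] at hs
    calc _ ≤ ∏ p ∈ s.filter (fun n : ℕ => n.Prime ∧ (n : ZMod 8) = 7), Real.exp (-(p : ℝ)⁻¹) := by
          refine Finset.prod_le_prod (fun p hp => ?_) (fun p _ => ?_)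
          · have : (1 : ℝ) ≤ p := by exact_mod_cast (Finset.mem_filter.1 hp).2.1.one_lt.le
            have := inv_le_one_of_one_le₀ this
            linarith
          · exact Real.one_sub_le_exp_neg _
      _ = Real.exp (-∑ p ∈ s.filter (fun n : ℕ => n.Prime ∧ (n : ZMod 8) = 7), (p : ℝ)⁻¹) := by
          rw [← Real.exp_sum, Finset.sum_neg_distrib]
      _ < Real.exp (Real.log ε) := Real.exp_lt_exp.2 (by linarith)
      _ = ε := Real.exp_log hε

lemma totient_prod_primes (P : Finset ℕ) (hP : ∀ p ∈ P, p.Prime) :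
    ((∏ p ∈ P, p).totient : ℝ) = ((∏ p ∈ P, p : ℕ) : ℝ) * ∏ p ∈ P, (1 - (p : ℝ)⁻¹) := by
  have h := Nat.totient_eq_mul_prod_factors (∏ p ∈ P, p)
  rw [Nat.primeFactors_prod hP] at h
  have h2 := congrArg (fun x : ℚ => (x : ℝ)) h
  push_cast at h2 ⊢
  exact h2

theorem stmt_7
    (hadamard_conj : ∀ p : ℕ, p.Prime → p ≠ 2 → ∃ N : ℕ, ∀ d : ℕ, N ≤ d →
      (Even d ∨ ∃ a : ZMod p, a ≠ 0 ∧ a ^ 2 = (d : ZMod p)) →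
      ∃ H : Matrix (Fin d) (Fin d) (ZMod p),
        (∀ i j, H i j ^ 2 = 1) ∧
        H.transpose * H = (d : ZMod p) • (1 : Matrix (Fin d) (Fin d) (ZMod p))) :
    Filter.limsup (fun n : ℕ =>
      (({d : ℕ | ¬ ∃ p : ℕ, ∃ hp : p.Prime, p % 4 = 3 ∧
            ∃ x : Fin (d ^ 2) → Fin d → @GaloisField p ⟨hp⟩ 2,
              @IsSIC p ⟨hp⟩ d x} ∩ Set.Icc 1 n).ncard : ℝ) / (n : ℝ))
      Filter.atTop = 0 := by
  set S := {d : ℕ | ¬ ∃ p : ℕ, ∃ hp : p.Prime, p % 4 = 3 ∧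
            ∃ x : Fin (d ^ 2) → Fin d → @GaloisField p ⟨hp⟩ 2,
              @IsSIC p ⟨hp⟩ d x} with hS
  have hgood : ∀ p : ℕ, p.Prime → p % 8 = 7 → ∃ N : ℕ, ∀ d : ℕ, N ≤ d →
      (d : ZMod p) = 8 → d ∉ S := by
    intro p hp hp8
    have : Fact p.Prime := ⟨hp⟩
    have hp2 : p ≠ 2 := by rintro rfl; omega
    obtain ⟨N, hN⟩ := hadamard_conj p hp hp2
    refine ⟨N, fun d hd hd8 => ?_⟩
    obtain ⟨b, hb⟩ := (ZMod.exists_sq_eq_two_iff hp2).2 (Or.inr hp8)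
    have h2 : (2 : ZMod p) ≠ 0 := by
      intro h
      have : ((2 : ℕ) : ZMod p) = 0 := by exact_mod_cast h
      rw [ZMod.natCast_eq_zero_iff, Nat.prime_dvd_prime_iff_eq hp Nat.prime_two] at this
      omega
    have hb0 : b ≠ 0 := by
      rintro rfl
      exact h2 (by simpa using hb)
    obtain ⟨H, hH1, hH2⟩ := hN d hd (Or.inr ⟨2 * b, mul_ne_zero h2 hb0, by
      rw [hd8]; linear_combination (-4) * hb⟩)
    rw [hS, Set.mem_ofPred_eq, not_not]
    exact ⟨p, hp, by omega, sic_exists p (by omega) (by rintro rfl; omega) d hd8 H hH1 hH2⟩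
  apply Filter.Tendsto.limsup_eq
  rw [Metric.tendsto_atTop]
  intro ε hε
  obtain ⟨P, hP, hPε⟩ := exists_primes_small (half_pos hε)
  choose! N hN using hgood
  set M := ∏ p ∈ P, p with hM
  have hMpos : 0 < M := Finset.prod_pos fun p hp => (hP p hp).1.pos
  set L := P.sup N + 9 with hL
  have hsub : ∀ n, S ∩ Set.Icc 1 n ⊆ ((Finset.range L ∪
      ((Finset.Ico 0 (0 + n)).filter (fun x => M.Coprime x)).image (fun x => x + 8) : Finset ℕ) : Set ℕ) := by
    rintro n d ⟨hdS, hd1, hdn⟩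
    simp only [Finset.coe_union, Set.mem_union, Finset.mem_coe, Finset.mem_range, Finset.mem_image,
      Finset.mem_filter, Finset.mem_Ico]
    by_cases hdL : d < L
    · exact Or.inl hdL
    right
    refine ⟨d - 8, ⟨by omega, ?_⟩, by omega⟩
    rw [hM, Nat.coprime_prod_left_iff]
    intro p hp
    rw [Nat.Prime.coprime_iff_not_dvd (hP p hp).1]
    intro hdvd
    have hNp : N p ≤ d := by
      have := Finset.le_sup (f := N) hp
      omega
    refine hN p (hP p hp).1 (hP p hp).2 d hNp ?_ hdS
    have h0 := (ZMod.natCast_eq_zero_iff (d - 8) p).2 hdvd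
    rw [Nat.cast_sub (by omega)] at h0
    have := sub_eq_zero.1 h0
    exact_mod_cast this
  have hcount : ∀ n : ℕ, ((S ∩ Set.Icc 1 n).ncard : ℝ) ≤ L + M + n * (ε / 2) := by
    intro n
    have h1 := Set.ncard_le_ncard (hsub n) (Finset.finite_toSet _)
    rw [Set.ncard_coe_finset] at h1
    have h2 := (h1.trans (Finset.card_union_le _ _)).trans
      (Nat.add_le_add_left (Finset.card_image_le.trans
        (Nat.Ico_filter_coprime_le 0 n hMpos.ne')) _)
    rw [Finset.card_range] at h2
    have h3 : ((S ∩ Set.Icc 1 n).ncard : ℝ) ≤ L + M.totient * ((n / M : ℕ) + 1) := by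
      exact_mod_cast h2
    have h4 : ((n / M : ℕ) : ℝ) ≤ n / M := Nat.cast_div_le
    have h5 : (M.totient : ℝ) ≤ M := by exact_mod_cast Nat.totient_le M
    have h6 : (M.totient : ℝ) = M * ∏ p ∈ P, (1 - (p : ℝ)⁻¹) :=
      totient_prod_primes P fun p hp => (hP p hp).1
    have hMR : (0 : ℝ) < M := by exact_mod_cast hMpos
    have h7 : (M.totient : ℝ) * (n / M : ℕ) ≤ n * (ε / 2) := by
      calc (M.totient : ℝ) * (n / M : ℕ) ≤ M.totient * (n / M) := by gcongr
        _ = n * ∏ p ∈ P, (1 - (p : ℝ)⁻¹) := by rw [h6]; field_simp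
        _ ≤ n * (ε / 2) := by gcongr
    linarith
  obtain ⟨n0, hn0⟩ := exists_nat_gt ((L + M : ℝ) / (ε / 2))
  refine ⟨n0 + 1, fun n hn => ?_⟩
  have hnpos : (0 : ℝ) < n := by exact_mod_cast (by omega : 0 < n)
  rw [Real.dist_eq, sub_zero, abs_of_nonneg (by positivity), div_lt_iff₀ hnpos]
  have h1 : (L + M : ℝ) < n0 * (ε / 2) := (div_lt_iff₀ (half_pos hε)).1 hn0
  have h2 : (n0 : ℝ) * (ε / 2) ≤ n * (ε / 2) := by
    have : (n0 : ℝ) ≤ n := by exact_mod_cast (by omega : n0 ≤ n)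
    gcongr
  have := hcount n
  linarith
end
end

section
/- Let X = [d]×[d] and let {x_m}_{m∈X} be a SIC in L^d given by the construction. For each ω ∈ C_4 = {1,−1,i,−i}, let Γ_ω be the directed graph on vertex set C_4 × X with an edge (α,m) → (β,n) if and only if (α·x_m, β·x_n) = 4ω. Then a permutation π ∈ S_X lies in Aut_w({x_m}) if and only if there exist (i) a bijection f : C_4 × X → C_4 × X with f(C_4 × {m}) = C_4 × {π(m)} for every m ∈ X, (ii) ε ∈ {±1} with ε = 1 if char K ≠ 3, and (iii) γ ∈ {identity, conjugation}, such that for every ω ∈ C_4, f induces an isomorphism from Γ_ω to Γ_{ε·γ(ω)}, i.e., (α,m) → (β,n) in Γ_ω if and only if f(α,m) → f(β,n) in Γ_{ε·γ(ω)}. -/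
open scoped BigOperators

noncomputable section

/-- The sesquilinear form `(x, y) = ∑ₖ conj (x k) * y k` on `Fin d → L`. -/
def sesq {L : Type*} [Field L] (conj : L →+* L) {d : ℕ} (x y : Fin d → L) : L :=
  ∑ k, conj (x k) * y k

/-- The SIC vectors of the construction: `x i j = h j ∘ (𝟙 + z • e i)` with
`z = -2(1 + i0)`, i.e. the `k`-th entry is `H k j * (1 + z * δ_{k i})`. -/
def sicVec {K L : Type*} [Field K] [Field L] (φ : K →+* L) (i0 : L) {d : ℕ}
    (H : Matrix (Fin d) (Fin d) K) (i j : Fin d) : Fin d → L :=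
  fun k => φ (H k j) * (1 + (-2 * (1 + i0)) * (if k = i then 1 else 0))

/-- The SIC vectors indexed by `[d] × [d]`. -/
def sicFam {K L : Type*} [Field K] [Field L] (φ : K →+* L) (i0 : L) {d : ℕ}
    (H : Matrix (Fin d) (Fin d) K) : Fin d × Fin d → Fin d → L :=
  fun m => sicVec φ i0 H m.1 m.2

/-- `(π, σ)` induces a weak equivalence from the matrix `A` to `A'`. -/
def MatWeakEquiv {R : Type*} [CommRing R] {X : Type*} (π σ : Equiv.Perm X)
    (A A' : Matrix X X R) : Prop :=
  ∃ ε ε' : X → R, (∀ i, ε i = 1 ∨ ε i = -1) ∧ (∀ i, ε' i = 1 ∨ ε' i = -1) ∧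
    ∀ i j, A' (π i) (σ j) = ε i * ε' j * A i j

/-- `π` induces a strong equivalence from the matrix `A` to `A'`. -/
def MatStrongEquiv {R : Type*} [CommRing R] {X : Type*} (π : Equiv.Perm X)
    (A A' : Matrix X X R) : Prop :=
  ∃ ε : X → R, (∀ i, ε i = 1 ∨ ε i = -1) ∧
    ∀ i j, A' (π i) (π j) = ε i * ε j * A i j

/-- `π` induces a weak equivalence from the tuple `y` to the tuple `y'`:
there are an invertible linear map `U` preserving the sesquilinear form, scalars `c m`
with `conj (c m) * c m` constant, and a field automorphism `γ` of `L` commuting with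
conjugation, such that `y' (π m) = c m • γ (U (y m))` (with `γ` acting entrywise). -/
def SICWeakEquiv {L : Type*} [Field L] (conj : L →+* L) {d : ℕ} {X : Type*}
    (π : Equiv.Perm X) (y y' : X → Fin d → L) : Prop :=
  ∃ (U : (Fin d → L) ≃ₗ[L] (Fin d → L)) (c : X → L) (cc : L) (γ : L ≃+* L),
    (∀ v w : Fin d → L, sesq conj (U v) (U w) = sesq conj v w) ∧
    (∀ m, conj (c m) * c m = cc) ∧
    (∀ a : L, γ (conj a) = conj (γ a)) ∧
    (∀ m, y' (π m) = fun k => c m * γ (U (y m) k))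

/-- `π` induces a strong equivalence from the tuple `y` to the tuple `y'`
(as in `SICWeakEquiv`, but with `γ` the identity). -/
def SICStrongEquiv {L : Type*} [Field L] (conj : L →+* L) {d : ℕ} {X : Type*}
    (π : Equiv.Perm X) (y y' : X → Fin d → L) : Prop :=
  ∃ (U : (Fin d → L) ≃ₗ[L] (Fin d → L)) (c : X → L) (cc : L),
    (∀ v w : Fin d → L, sesq conj (U v) (U w) = sesq conj v w) ∧
    (∀ m, conj (c m) * c m = cc) ∧
    (∀ m, y' (π m) = fun k => c m * U (y m) k)

/-- The edge relation of the directed graph `Γ_ω`: there is an edge `(α, m) → (β, n)`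
iff `(α • x m, β • x n) = 4 ω`. -/
def sicEdge {L : Type*} [Field L] (conj : L →+* L) {d : ℕ} {X : Type*}
    (x : X → Fin d → L) (ω : L) (v w : L × X) : Prop :=
  sesq conj (fun k => v.1 * x v.2 k) (fun k => w.1 * x w.2 k) = 4 * ω

theorem c4_iff {L : Type*} [Field L] {i0 : L} (hi0 : i0 ^ 2 = -1) (a : L) :
    (a = 1 ∨ a = -1 ∨ a = i0 ∨ a = -i0) ↔ a ^ 4 = 1 := by
  constructor
  · have h4 : i0 ^ 4 = 1 := by
      have : i0 ^ 4 = (i0 ^ 2) ^ 2 := by ring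
      rw [this, hi0]; ring
    rintro (h | h | h | h) <;> subst h
    · ring
    · ring
    · exact h4
    · rw [← h4]; ring
  · intro h
    have h1 : (a - 1) * ((a + 1) * ((a - i0) * (a + i0))) = 0 := by
      linear_combination h - (a ^ 2 - 1) * hi0
    rcases mul_eq_zero.1 h1 with h | h
    · exact Or.inl (sub_eq_zero.1 h)
    rcases mul_eq_zero.1 h with h | h
    · exact Or.inr (Or.inl (eq_neg_of_add_eq_zero_left h))
    rcases mul_eq_zero.1 h with h | h
    · exact Or.inr (Or.inr (Or.inl (sub_eq_zero.1 h)))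
    · exact Or.inr (Or.inr (Or.inr (eq_neg_of_add_eq_zero_left h)))

theorem sesq_smul {L : Type*} [Field L] (conj : L →+* L) {d : ℕ} (a b : L) (x y : Fin d → L) :
    sesq conj (fun k => a * x k) (fun k => b * y k) = conj a * b * sesq conj x y := by
  unfold sesq
  rw [Finset.mul_sum]
  refine Finset.sum_congr rfl fun k _ => ?_
  rw [map_mul]; ring

theorem sesq_map {L : Type*} [Field L] (conj : L →+* L) {d : ℕ} (γ : L ≃+* L)
    (hγ : ∀ a : L, γ (conj a) = conj (γ a)) (x y : Fin d → L) :
    sesq conj (fun k => γ (x k)) (fun k => γ (y k)) = γ (sesq conj x y) := by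
  unfold sesq
  simp [map_sum, hγ]

theorem sesq_lc {L : Type*} [Field L] (conj : L →+* L) {d : ℕ} {X : Type*} [Fintype X]
    (x : X → Fin d → L) (a b : X → L) :
    sesq conj (Fintype.linearCombination L x a) (Fintype.linearCombination L x b) =
      ∑ m, ∑ n, conj (a m) * b n * sesq conj (x m) (x n) := by
  simp only [sesq, Fintype.linearCombination_apply, Finset.sum_apply, Pi.smul_apply, smul_eq_mul,
    map_sum, map_mul, Finset.mul_sum, Finset.sum_mul]
  rw [Finset.sum_comm]
  simp only [Finset.sum_comm (s := (Finset.univ : Finset (Fin d)))]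
  rw [Finset.sum_comm]
  refine Finset.sum_congr rfl fun m _ => ?_
  refine Finset.sum_congr rfl fun n _ => ?_
  refine Finset.sum_congr rfl fun k _ => ?_
  ring

theorem sesq_single {L : Type*} [Field L] (conj : L →+* L) {d : ℕ} (k : Fin d) (v : Fin d → L) :
    sesq conj (Pi.single k 1) v = v k := by
  unfold sesq
  rw [Finset.sum_eq_single k]
  · simp
  · intro b _ hb; simp [hb]
  · simp

theorem exists_unitary {L : Type*} [Field L] (conj : L →+* L) {d : ℕ} {X : Type*} [Fintype X]
    [DecidableEq X] (x y : X → Fin d → L)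
    (hs : Function.Surjective (Fintype.linearCombination L x))
    (hg : ∀ m n, sesq conj (y m) (y n) = sesq conj (x m) (x n)) :
    ∃ U : (Fin d → L) ≃ₗ[L] (Fin d → L),
      (∀ v w, sesq conj (U v) (U w) = sesq conj v w) ∧ ∀ m, U (x m) = y m := by
  obtain ⟨R, hR⟩ := (Fintype.linearCombination L x).exists_rightInverse_of_surjective
    (LinearMap.range_eq_top.2 hs)
  have hR' : ∀ v, Fintype.linearCombination L x (R v) = v := fun v => by
    simpa using LinearMap.congr_fun hR v
  have key : ∀ a b, sesq conj (Fintype.linearCombination L y a) (Fintype.linearCombination L y b) =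
      sesq conj (Fintype.linearCombination L x a) (Fintype.linearCombination L x b) := by
    intro a b
    rw [sesq_lc, sesq_lc]
    simp only [hg]
  let U0 : (Fin d → L) →ₗ[L] (Fin d → L) := (Fintype.linearCombination L y) ∘ₗ R
  have hU0 : ∀ v w, sesq conj (U0 v) (U0 w) = sesq conj v w := by
    intro v w
    simp only [U0, LinearMap.comp_apply]
    rw [key, hR', hR']
  have hinj : Function.Injective U0 := by
    rw [← LinearMap.ker_eq_bot, LinearMap.ker_eq_bot']
    intro v hv
    funext k
    rw [← sesq_single conj k v, ← hU0, hv]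
    simp [sesq]
  let U := LinearEquiv.ofInjectiveEndo U0 hinj
  have hUU : ∀ v, U v = U0 v := fun v => rfl
  refine ⟨U, fun v w => by rw [hUU, hUU, hU0], fun m => ?_⟩
  funext k
  obtain ⟨w, hw⟩ := U.surjective (Pi.single k 1)
  rw [← sesq_single conj k (U (x m)), ← sesq_single conj k (y m), ← hw, hUU, hUU, hU0]
  have h1 : ∀ x : X → Fin d → L, x m = Fintype.linearCombination L x (Pi.single m 1) := by
    intro x
    simp
  rw [h1 y]
  simp only [U0, LinearMap.comp_apply]
  rw [key, hR', ← h1]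

section
variable {K L : Type*} [Field K] [Field L]

theorem gram_formula
    (φ : K →+* L) (i0 : L) (hi0 : i0 ^ 2 = -1)
    (conj : L →+* L)
    (hconjφ : ∀ a : K, conj (φ a) = φ a) (hconji : conj i0 = -i0)
    {d : ℕ} (H : Matrix (Fin d) (Fin d) K)
    (hH2 : H.transpose * H = (d : K) • (1 : Matrix (Fin d) (Fin d) K))
    (hd8 : (d : K) = 8) (m n : Fin d × Fin d) :
    sesq conj (sicFam φ i0 H m) (sicFam φ i0 H n) =
      (if m.2 = n.2 then 8 else 0) + (-2 * (1 - i0)) * (φ (H m.1 m.2) * φ (H m.1 n.2))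
      + (-2 * (1 + i0)) * (φ (H n.1 m.2) * φ (H n.1 n.2))
      + (if m.1 = n.1 then 8 * (φ (H m.1 m.2) * φ (H m.1 n.2)) else 0) := by
  obtain ⟨i, j⟩ := m
  obtain ⟨k, l⟩ := n
  have h1 : ∑ t, φ (H t j) * φ (H t l) = if j = l then 8 else 0 := by
    have := congrFun (congrFun hH2 j) l
    rw [Matrix.mul_apply] at this
    simp only [Matrix.transpose_apply, Matrix.smul_apply, Matrix.one_apply, hd8] at this
    have h2 := congrArg φ this
    rw [map_sum] at h2
    simp only [map_mul] at h2
    rw [h2]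
    split_ifs <;> simp [map_ofNat φ 8]
  have h2 : ∀ t, conj (sicFam φ i0 H (i, j) t) * sicFam φ i0 H (k, l) t =
      φ (H t j) * φ (H t l)
      + (if t = i then (-2 * (1 - i0)) * (φ (H t j) * φ (H t l)) else 0)
      + (if t = k then (-2 * (1 + i0)) * (φ (H t j) * φ (H t l)) else 0)
      + (if t = i then (if t = k then 8 * (φ (H t j) * φ (H t l)) else 0) else 0) := by
    intro t
    simp only [sicFam, sicVec, map_mul, map_add, map_neg, map_one, map_ofNat, hconjφ, hconji]
    split_ifs <;> simp only [map_one, map_zero]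
    · linear_combination (-4 * φ (H t j) * φ (H t l)) * hi0
    · ring
    · ring
    · ring
  unfold sesq
  simp only [h2, Finset.sum_add_distrib, h1, Finset.sum_ite_eq', Finset.mem_univ, if_true]

theorem gram_diag
    (φ : K →+* L) (i0 : L) (hi0 : i0 ^ 2 = -1)
    (conj : L →+* L)
    (hconjφ : ∀ a : K, conj (φ a) = φ a) (hconji : conj i0 = -i0)
    {d : ℕ} (H : Matrix (Fin d) (Fin d) K)
    (hH1 : ∀ i j, H i j ^ 2 = 1)
    (hH2 : H.transpose * H = (d : K) • (1 : Matrix (Fin d) (Fin d) K))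
    (hd8 : (d : K) = 8) (m : Fin d × Fin d) :
    sesq conj (sicFam φ i0 H m) (sicFam φ i0 H m) = 12 := by
  rw [gram_formula φ i0 hi0 conj hconjφ hconji H hH2 hd8]
  have hs : φ (H m.1 m.2) * φ (H m.1 m.2) = 1 := by
    rw [← map_mul, ← pow_two, hH1, map_one]
  simp only [if_true, hs]
  ring

theorem gram_off
    (φ : K →+* L) (i0 : L) (hi0 : i0 ^ 2 = -1)
    (conj : L →+* L)
    (hconjφ : ∀ a : K, conj (φ a) = φ a) (hconji : conj i0 = -i0)
    {d : ℕ} (H : Matrix (Fin d) (Fin d) K)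
    (hH1 : ∀ i j, H i j ^ 2 = 1)
    (hH2 : H.transpose * H = (d : K) • (1 : Matrix (Fin d) (Fin d) K))
    (hd8 : (d : K) = 8) (m n : Fin d × Fin d) (hmn : m ≠ n) :
    ∃ ω : L, (ω = 1 ∨ ω = -1 ∨ ω = i0 ∨ ω = -i0) ∧
      sesq conj (sicFam φ i0 H m) (sicFam φ i0 H n) = 4 * ω := by
  rw [gram_formula φ i0 hi0 conj hconjφ hconji H hH2 hd8]
  obtain ⟨i, j⟩ := m
  obtain ⟨k, l⟩ := n
  have hp : ∀ a b c, φ (H a b) * φ (H a c) = 1 ∨ φ (H a b) * φ (H a c) = -1 := by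
    intro a b c
    apply mul_self_eq_one_iff.1
    have e : φ (H a b) * φ (H a c) * (φ (H a b) * φ (H a c)) = φ (H a b ^ 2) * φ (H a c ^ 2) := by
      rw [map_pow, map_pow]; ring
    rw [e, hH1, hH1]; simp
  have hs : ∀ a b, φ (H a b) * φ (H a b) = 1 := by
    intro a b
    rw [← map_mul, ← pow_two, hH1, map_one]
  by_cases hjl : j = l
  · subst hjl
    have hik : i ≠ k := fun h => hmn (by rw [h])
    refine ⟨1, Or.inl rfl, ?_⟩
    simp only [if_true, hik, if_false, hs]
    ring
  by_cases hik : i = k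
  · subst hik
    simp only [if_true, hjl, if_false]
    refine ⟨φ (H i j) * φ (H i l), ?_, by ring⟩
    rcases hp i j l with h | h
    · exact Or.inl h
    · exact Or.inr (Or.inl h)
  · simp only [hik, hjl, if_false]
    rcases hp i j l with h | h <;> rcases hp k j l with h' | h' <;> rw [h, h']
    · exact ⟨-1, by simp, by ring⟩
    · exact ⟨i0, by simp, by ring⟩
    · exact ⟨-i0, by simp, by ring⟩
    · exact ⟨1, by simp, by ring⟩

theorem one_add_z_ne (hKroot : ∀ a : K, a ^ 2 ≠ -1)
    (φ : K →+* L) (i0 : L) (hi0 : i0 ^ 2 = -1) : (1 + (-2 * (1 + i0)) : L) ≠ 0 := by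
  intro h
  apply hKroot 2
  apply φ.injective
  rw [map_pow, map_neg, map_one, map_ofNat]
  linear_combination (-1 + 2 * i0) * h + 4 * hi0

theorem span_surj
    (hK2 : (2 : K) ≠ 0) (hKroot : ∀ a : K, a ^ 2 ≠ -1)
    (φ : K →+* L) (i0 : L) (hi0 : i0 ^ 2 = -1)
    {d : ℕ} (H : Matrix (Fin d) (Fin d) K)
    (hH2 : H.transpose * H = (d : K) • (1 : Matrix (Fin d) (Fin d) K))
    (hd8 : (d : K) = 8) :
    Function.Surjective (Fintype.linearCombination L (sicFam φ i0 H)) := by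
  have h8 : (8 : K) ≠ 0 := by
    have : (8 : K) = 2 ^ 3 := by norm_num
    rw [this]; exact pow_ne_zero _ hK2
  have h8L : (8 : L) ≠ 0 := by
    have := (map_ne_zero φ).2 h8
    simpa [map_ofNat φ 8] using this
  have hHH : H * H.transpose = (8 : K) • (1 : Matrix (Fin d) (Fin d) K) := by
    rw [hd8] at hH2
    have h1 : ((8 : K)⁻¹ • H.transpose) * H = 1 := by
      rw [Matrix.smul_mul, hH2, smul_smul, inv_mul_cancel₀ h8, one_smul]
    have h2 := mul_eq_one_comm.1 h1
    rw [Matrix.mul_smul] at h2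
    rw [← h2, smul_smul, mul_inv_cancel₀ h8, one_smul]
  have hz := one_add_z_ne hKroot φ i0 hi0
  rw [← LinearMap.range_eq_top, eq_top_iff, ← (Pi.basisFun L (Fin d)).span_eq, Submodule.span_le]
  rintro _ ⟨k, rfl⟩
  rw [Fintype.range_linearCombination]
  have hrow : ∀ t, ∑ j, φ (H k j) * φ (H t j) = if k = t then 8 else 0 := by
    intro t
    have := congrFun (congrFun hHH k) t
    rw [Matrix.mul_apply] at this
    simp only [Matrix.transpose_apply, Matrix.smul_apply, Matrix.one_apply] at this
    have h2 := congrArg φ this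
    rw [map_sum] at h2
    simp only [map_mul] at h2
    rw [h2]
    split_ifs <;> simp [map_ofNat φ 8]
  have he : (Pi.basisFun L (Fin d)) k =
      (8 * (1 + (-2 * (1 + i0))))⁻¹ • ∑ j, φ (H k j) • sicFam φ i0 H (k, j) := by
    funext t
    simp only [Pi.basisFun_apply, Pi.smul_apply, Finset.sum_apply, smul_eq_mul, sicFam, sicVec]
    simp only [← mul_assoc]
    rw [← Finset.sum_mul, hrow]
    by_cases h : t = k
    · subst h
      simp only [Pi.single_eq_same, if_true]
      rw [mul_one, inv_mul_cancel₀ (mul_ne_zero h8L hz)]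
    · have h' : k ≠ t := fun e => h e.symm
      simp [h, h']
  rw [he]
  refine Submodule.smul_mem _ _ (Submodule.sum_mem _ fun j _ => Submodule.smul_mem _ _ ?_)
  exact Submodule.subset_span ⟨(k, j), rfl⟩
end

theorem stmt_12 {K L : Type*} [Field K] [Field L]
    (hK2 : (2 : K) ≠ 0) (hKroot : ∀ a : K, a ^ 2 ≠ -1)
    (φ : K →+* L) (i0 : L) (hi0 : i0 ^ 2 = -1)
    (conj : L →+* L) (hconj2 : ∀ x : L, conj (conj x) = x)
    (hconjφ : ∀ a : K, conj (φ a) = φ a) (hconji : conj i0 = -i0)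
    (hLgen : ∀ x : L, ∃ a b : K, x = φ a + φ b * i0)
    {d : ℕ} (H : Matrix (Fin d) (Fin d) K)
    (hH1 : ∀ i j, H i j ^ 2 = 1)
    (hH2 : H.transpose * H = (d : K) • (1 : Matrix (Fin d) (Fin d) K))
    (hd8 : (d : K) = 8)
    (π : Equiv.Perm (Fin d × Fin d)) :
    SICWeakEquiv conj π (sicFam φ i0 H) (sicFam φ i0 H) ↔
    ∃ f : ({a : L // a = 1 ∨ a = -1 ∨ a = i0 ∨ a = -i0} × (Fin d × Fin d)) ≃
        ({a : L // a = 1 ∨ a = -1 ∨ a = i0 ∨ a = -i0} × (Fin d × Fin d)),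
      (∀ v, (f v).2 = π v.2) ∧
      ∃ ε : L, (ε = 1 ∨ ε = -1) ∧ ((3 : K) ≠ 0 → ε = 1) ∧
      ∃ g : L → L, (g = id ∨ g = fun a => conj a) ∧
        ∀ ω : L, (ω = 1 ∨ ω = -1 ∨ ω = i0 ∨ ω = -i0) → ∀ v w,
          (sicEdge conj (sicFam φ i0 H) ω (v.1.1, v.2) (w.1.1, w.2) ↔
            sicEdge conj (sicFam φ i0 H) (ε * g ω)
              ((f v).1.1, (f v).2) ((f w).1.1, (f w).2)) := by
  have hdiag := gram_diag φ i0 hi0 conj hconjφ hconji H hH1 hH2 hd8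
  have hoff := gram_off φ i0 hi0 conj hconjφ hconji H hH1 hH2 hd8
  have h2L : (2 : L) ≠ 0 := by
    have := (map_ne_zero φ).2 hK2
    simpa [map_ofNat φ 2] using this
  have h4L : (4 : L) ≠ 0 := by
    have : (4 : L) = 2 ^ 2 := by norm_num
    rw [this]; exact pow_ne_zero _ h2L
  have h3L : (3 : K) ≠ 0 → (3 : L) ≠ 0 := by
    intro h
    have := (map_ne_zero φ).2 h
    simpa [map_ofNat φ 3] using this
  have hnorm : ∀ a : L, (a = 1 ∨ a = -1 ∨ a = i0 ∨ a = -i0) → conj a * a = 1 := by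
    rintro a (h | h | h | h) <;> subst h <;>
      simp only [map_neg, map_one, hconji]
    · ring
    · ring
    · linear_combination -hi0
    · linear_combination -hi0
  set x := sicFam φ i0 H with hx
  constructor
  · rintro ⟨U, c, cc, γ, hU, hc, hγ, hy⟩
    have hrel : ∀ m n, sesq conj (x (π m)) (x (π n)) =
        conj (c m) * c n * γ (sesq conj (x m) (x n)) := by
      intro m n
      rw [hy m, hy n, sesq_smul, sesq_map conj γ hγ, hU]
    rcases isEmpty_or_nonempty (Fin d × Fin d) with hX | ⟨⟨m0⟩⟩
    · refine ⟨Equiv.refl _, fun v => (hX.false v.2).elim, 1, Or.inl rfl, fun _ => rfl, id,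
        Or.inl rfl, fun ω _ v => (hX.false v.2).elim⟩
    have hc0 : ∀ m, c m ≠ 0 := by
      intro m hm
      have h1 := congrFun (hy m) (π m).1
      rw [hm, zero_mul, hx] at h1
      simp only [sicFam, sicVec, if_true, mul_one] at h1
      rcases mul_eq_zero.1 h1 with h | h
      · rw [map_eq_zero] at h
        have := hH1 (π m).1 (π m).2
        rw [h] at this
        norm_num at this
      · exact one_add_z_ne hKroot φ i0 hi0 h
    have hcc0 : cc ≠ 0 := by
      rw [← hc m0]
      exact mul_ne_zero ((map_ne_zero conj).2 (hc0 _)) (hc0 _)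
    have hγ4 : ∀ a : L, a ^ 4 = 1 → (γ a) ^ 4 = 1 := by
      intro a ha; rw [← map_pow, ha, map_one]
    have hu : ∀ m n, m ≠ n → (conj (c m) * c n) ^ 4 = 1 := by
      intro m n hmn
      obtain ⟨ω, hω, h1⟩ := hoff m n hmn
      obtain ⟨ω', hω', h2⟩ := hoff (π m) (π n) (fun h => hmn (π.injective h))
      have h3 := hrel m n
      rw [h1, h2, map_mul, map_ofNat γ 4] at h3
      have h4 : ω' = conj (c m) * c n * γ ω := by
        apply mul_left_cancel₀ h4L
        rw [h3]; ring
      have h5 := (c4_iff hi0 _).1 hω'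
      rw [h4, mul_pow, hγ4 _ ((c4_iff hi0 _).1 hω), mul_one] at h5
      exact h5
    have hcc3 : (3 : K) ≠ 0 → cc = 1 := by
      intro h3
      have h := hrel m0 m0
      rw [hdiag, hdiag, hc, map_ofNat γ 12] at h
      have h12 : (12 : L) ≠ 0 := by
        have : (12 : L) = 4 * 3 := by norm_num
        rw [this]; exact mul_ne_zero h4L (h3L h3)
      apply mul_right_cancel₀ h12
      rw [← h, one_mul]
    have hccpm : cc = 1 ∨ cc = -1 := by
      by_cases h3 : (3 : K) = 0
      · have hd : 1 < d := by
          by_contra hd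
          have : d = 0 ∨ d = 1 := by omega
          rcases this with h | h
          · subst h; exact m0.1.elim0
          · rw [h] at hd8
            apply one_ne_zero (α := K)
            push_cast at hd8
            linear_combination -hd8 - 2 * h3
        have hne : ((⟨0, by omega⟩, ⟨0, by omega⟩) : Fin d × Fin d) ≠
            (⟨0, by omega⟩, ⟨1, hd⟩) := by simp
        have h1 := hnorm _ ((c4_iff hi0 _).2 (hu _ _ hne))
        generalize ((⟨0, by omega⟩, ⟨0, by omega⟩) : Fin d × Fin d) = m at h1
        generalize ((⟨0, by omega⟩, ⟨1, hd⟩) : Fin d × Fin d) = n at h1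
        apply mul_self_eq_one_iff.1
        rw [map_mul, hconj2] at h1
        rw [← h1]
        nth_rewrite 1 [← hc m]
        rw [← hc n]
        ring
      · exact Or.inl (hcc3 h3)
    have hccsq : cc * cc = 1 := mul_self_eq_one_iff.2 hccpm
    have hcc4 : cc ^ 4 = 1 := by
      have : cc ^ 4 = (cc * cc) * (cc * cc) := by ring
      rw [this, hccsq, one_mul]
    have hα : ∀ n, (c n / c m0) ^ 4 = 1 := by
      intro n
      by_cases h : m0 = n
      · subst h; rw [div_self (hc0 _), one_pow]
      · have h1 := hu m0 n h
        have h2 : c n / c m0 = conj (c m0) * c n / cc := by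
          rw [div_eq_div_iff (hc0 _) hcc0, ← hc m0]; ring
        rw [h2, div_pow, h1, hcc4, div_one]
    have hγi : γ i0 = i0 ∨ γ i0 = -i0 := by
      apply sq_eq_sq_iff_eq_or_eq_neg.1
      rw [← map_pow, hi0, map_neg, map_one]
    have hgω : ∃ g : L → L, (g = id ∨ g = fun a => conj a) ∧
        ∀ ω : L, (ω = 1 ∨ ω = -1 ∨ ω = i0 ∨ ω = -i0) → g ω = γ ω := by
      rcases hγi with h | h
      · refine ⟨id, Or.inl rfl, ?_⟩
        rintro ω (h' | h' | h' | h') <;> subst h' <;> simp [h]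
      · refine ⟨fun a => conj a, Or.inr rfl, ?_⟩
        rintro ω (h' | h' | h' | h') <;> subst h' <;> simp [h, hconji]
    obtain ⟨g, hg, hgω⟩ := hgω
    let f0 : ({a : L // a = 1 ∨ a = -1 ∨ a = i0 ∨ a = -i0} × (Fin d × Fin d)) →
        ({a : L // a = 1 ∨ a = -1 ∨ a = i0 ∨ a = -i0} × (Fin d × Fin d)) :=
      fun v => (⟨γ v.1.1 / (c v.2 / c m0), (c4_iff hi0 _).2 (by
        rw [div_pow, hα, hγ4 _ ((c4_iff hi0 _).1 v.1.2), div_one])⟩, π v.2)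
    have hinj : Function.Injective f0 := by
      rintro ⟨⟨a, ha⟩, m⟩ ⟨⟨b, hb⟩, n⟩ h
      have h1 : π m = π n := congrArg Prod.snd h
      have h2 : γ a / (c m / c m0) = γ b / (c n / c m0) :=
        congrArg (fun v => v.1.1) h
      have h3 := π.injective h1
      subst h3
      have h4 : c m / c m0 ≠ 0 := div_ne_zero (hc0 _) (hc0 _)
      have h5 : a = b := γ.injective (by
        rwa [div_left_inj' h4] at h2)
      subst h5
      rfl
    have hfin : Finite {a : L // a = 1 ∨ a = -1 ∨ a = i0 ∨ a = -i0} := by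
      have : ({1, -1, i0, -i0} : Set L).Finite := Set.toFinite _
      exact this
    have hbij : Function.Bijective f0 := Finite.injective_iff_bijective.1 hinj
    refine ⟨Equiv.ofBijective f0 hbij, fun v => rfl, cc, hccpm, hcc3, g, hg, ?_⟩
    rintro ω hω ⟨⟨a, ha⟩, m⟩ ⟨⟨b, hb⟩, n⟩
    simp only [sicEdge, Equiv.ofBijective_apply, f0]
    rw [sesq_smul, sesq_smul, hrel, hgω ω hω]
    have hcm : conj (c m) ≠ 0 := (map_ne_zero conj).2 (hc0 _)
    have hcm0 : conj (c m0) ≠ 0 := (map_ne_zero conj).2 (hc0 _)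
    have e : conj (γ a / (c m / c m0)) * (γ b / (c n / c m0)) *
        (conj (c m) * c n * γ (sesq conj (x m) (x n))) =
        cc * γ (conj a * b * sesq conj (x m) (x n)) := by
      have := hc0 n
      have := hc0 m0
      rw [map_div₀, map_div₀, ← hγ, map_mul, map_mul, ← hc m0]
      field_simp
    rw [e]
    have e2 : 4 * (cc * γ ω) = cc * γ (4 * ω) := by
      rw [map_mul, map_ofNat γ 4]; ring
    rw [e2, mul_right_inj' hcc0, γ.injective.eq_iff]
  · rintro ⟨f, hf, ε, hε, hε3, g, hg, hE⟩
    have hγ : ∃ γ : L ≃+* L, (∀ a, g a = γ a) ∧ (∀ a, γ (γ a) = a) ∧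
        ∀ a, γ (conj a) = conj (γ a) := by
      rcases hg with h | h
      · exact ⟨RingEquiv.refl L, fun a => by simp [h], fun a => rfl, fun a => rfl⟩
      · exact ⟨RingEquiv.ofRingHom conj conj (RingHom.ext hconj2) (RingHom.ext hconj2),
          fun a => by simp [h], fun a => hconj2 a, fun a => rfl⟩
    obtain ⟨γ, hgγ, hγγ, hγc⟩ := hγ
    have hs : ∃ s : L, conj s * s = ε := by
      rcases hε with h | h
      · exact ⟨1, by simp [h]⟩
      · refine ⟨1 + i0, ?_⟩
        have h3 : (3 : K) = 0 := by
          by_contra h3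
          have h1 := hε3 h3
          rw [h] at h1
          exact h2L (by linear_combination -h1)
        have h3' : (3 : L) = 0 := by
          rw [← map_ofNat φ 3, h3, map_zero]
        rw [h, map_add, map_one, hconji]
        linear_combination -hi0 + h3'
    obtain ⟨s, hs⟩ := hs
    have hεε : ε * ε = 1 := mul_self_eq_one_iff.2 hε
    have hε0 : ε ≠ 0 := by
      intro h; rw [h] at hεε; simp at hεε
    have hs0 : s ≠ 0 := by
      rintro rfl; simp at hs; exact hε0 hs.symm
    have hcs0 : conj s ≠ 0 := (map_ne_zero conj).2 hs0
    let F : Fin d × Fin d → L := fun m => (f (⟨1, Or.inl rfl⟩, m)).1.1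
    have hF : ∀ m, conj (F m) * F m = 1 := fun m => hnorm _ (f (⟨1, Or.inl rfl⟩, m)).1.2
    have hF0 : ∀ m, F m ≠ 0 := by
      intro m h
      have := hF m
      rw [h, mul_zero] at this
      exact zero_ne_one this
    have hcF0 : ∀ m, conj (F m) ≠ 0 := fun m => (map_ne_zero conj).2 (hF0 m)
    have hrel : ∀ m n, conj (F m) * F n * sesq conj (x (π m)) (x (π n)) =
        ε * γ (sesq conj (x m) (x n)) := by
      intro m n
      by_cases hmn : m = n
      · subst hmn
        rw [hdiag, hdiag, hF, map_ofNat γ 12, one_mul]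
        by_cases h3 : (3 : K) = 0
        · have h3' : (3 : L) = 0 := by
            rw [← map_ofNat φ 3, h3, map_zero]
          linear_combination (4 - 4 * ε) * h3'
        · rw [hε3 h3, one_mul]
      · obtain ⟨ω, hω, h1⟩ := hoff m n hmn
        have h2 := (hE ω hω (⟨1, Or.inl rfl⟩, m) (⟨1, Or.inl rfl⟩, n)).1 (by
          simp only [sicEdge]
          rw [sesq_smul, h1, map_one]; ring)
        simp only [sicEdge] at h2
        rw [sesq_smul, hf, hf, hgγ] at h2
        rw [h1, map_mul, map_ofNat γ 4]
        refine h2.trans ?_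
        ring
    let c : Fin d × Fin d → L := fun m => s * (F m)⁻¹
    have hc0 : ∀ m, c m ≠ 0 := fun m => mul_ne_zero hs0 (inv_ne_zero (hF0 m))
    let y : Fin d × Fin d → Fin d → L := fun m k => γ ((c m)⁻¹ * x (π m) k)
    have hy : ∀ m n, sesq conj (y m) (y n) = sesq conj (x m) (x n) := by
      intro m n
      have h1 : sesq conj (y m) (y n) =
          γ (conj (c m)⁻¹ * (c n)⁻¹ * sesq conj (x (π m)) (x (π n))) := by
        rw [← sesq_smul]
        exact sesq_map conj γ hγc _ _
      have h2 : conj (c m)⁻¹ * (c n)⁻¹ * sesq conj (x (π m)) (x (π n)) =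
          ε⁻¹ * (conj (F m) * F n * sesq conj (x (π m)) (x (π n))) := by
        simp only [c]
        rw [← hs, map_inv₀, map_mul, map_inv₀]
        have := hF0 n
        have := hcF0 m
        field_simp
      rw [h1, h2, hrel, inv_mul_cancel_left₀ hε0, hγγ]
    obtain ⟨U, hU, hUx⟩ := exists_unitary conj x y
      (span_surj hK2 hKroot φ i0 hi0 H hH2 hd8) hy
    refine ⟨U, c, ε, γ, hU, ?_, hγc, ?_⟩
    · intro m
      simp only [c]
      have h1 : conj (s * (F m)⁻¹) * (s * (F m)⁻¹) = (conj s * s) * (conj (F m) * F m)⁻¹ := by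
        rw [map_mul, map_inv₀, mul_inv]; ring
      rw [h1, hs, hF, inv_one, mul_one]
    · intro m
      funext k
      rw [hUx]
      simp only [y]
      rw [hγγ, mul_inv_cancel_left₀ (hc0 m)]
end
end
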